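/- arXiv:2112.03684 — 2 statements merged into one kernel-verified Lean document; each statement's English description precedes it below -/
import Mathlib

section
/- Let Γ be any one of the type two groups Γ₂(p,k) for (p,k) in {(6,4), (6,6), (3,7), (3,8), (3,9), (3,10), (3,12), (4,5), (4,6), (4,8), (5,4), (5,5)}, the type three groups Γ₃(p,k) for (p,k) in {(7,2), (8,2), (9,2), (10,2), (12,2), (18,2)}, or the type four groups Γ₄(p,k) for (p,k) in {(7,3), (8,3), (8,4), (9,3), (10,3), (10,5), (12,3), (12,6), (18,3)}. Then the set of type-preserving homomorphisms Γ → PGL(3,ℂ), modulo the conjugation action of PGL(3,ℂ), is finite. -/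
noncomputable section

abbrev GL3 := GL (Fin 3) ℂ

/-- The subgroup of nonzero scalar matrices in `GL(3,ℂ)`. -/
def scalarSubgroup : Subgroup GL3 := (Units.map (Matrix.scalar (Fin 3)).toMonoidHom).range

instance : scalarSubgroup.Normal := by
  constructor
  intro x hx g
  obtain ⟨c, rfl⟩ := hx
  refine ⟨c, ?_⟩
  apply Units.ext
  have hcomm : Commute ((Matrix.scalar (Fin 3)) c.val) (g : Matrix (Fin 3) (Fin 3) ℂ) :=
    Matrix.scalar_commute _ (fun _ => Commute.all _ _) _
  simp only [Units.val_mul]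
  calc (Units.map (Matrix.scalar (Fin 3)).toMonoidHom c : Matrix (Fin 3) (Fin 3) ℂ)
      = (Matrix.scalar (Fin 3)) c.val := rfl
    _ = (g : Matrix (Fin 3) (Fin 3) ℂ) * ((Matrix.scalar (Fin 3)) c.val) * (g⁻¹ : GL3) := by
        rw [← hcomm.eq, mul_assoc, ← Units.val_mul, mul_inv_cancel, Units.val_one, mul_one]

/-- `PGL(3,ℂ)`: the quotient of `GL(3,ℂ)` by the subgroup of nonzero scalar matrices,
equipped with the quotient topology. -/
abbrev PGL3 := GL3 ⧸ scalarSubgroup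

/-- An element of `PGL(3,ℂ)` is a complex reflection if it has a lift in `GL(3,ℂ)` that is
diagonalizable, non-scalar, and has an eigenvalue whose eigenspace is 2-dimensional. -/
def IsComplexReflection (x : PGL3) : Prop :=
  ∃ M : GL3, (QuotientGroup.mk M : PGL3) = x ∧
    (∃ (B : GL3) (d : Fin 3 → ℂ),
      (B : Matrix (Fin 3) (Fin 3) ℂ) * M * (B⁻¹ : GL3) = Matrix.diagonal d) ∧
    (∀ c : ℂ, (M : Matrix (Fin 3) (Fin 3) ℂ) ≠ c • (1 : Matrix (Fin 3) (Fin 3) ℂ)) ∧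
    (∃ μ : ℂ, Module.finrank ℂ
      (Module.End.eigenspace (Matrix.mulVecLin (M : Matrix (Fin 3) (Fin 3) ℂ)) μ) = 2)

/-- An element of `PGL(3,ℂ)` is regular elliptic if it has a lift in `GL(3,ℂ)` of finite order
with three pairwise distinct eigenvalues. -/
def IsRegularElliptic (x : PGL3) : Prop :=
  ∃ M : GL3, (QuotientGroup.mk M : PGL3) = x ∧
    (∃ n : ℕ, 0 < n ∧ M ^ n = 1) ∧
    (∃ a b c : ℂ, a ≠ b ∧ a ≠ c ∧ b ≠ c ∧
      Module.End.HasEigenvalue (Matrix.mulVecLin (M : Matrix (Fin 3) (Fin 3) ℂ)) a ∧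
      Module.End.HasEigenvalue (Matrix.mulVecLin (M : Matrix (Fin 3) (Fin 3) ℂ)) b ∧
      Module.End.HasEigenvalue (Matrix.mulVecLin (M : Matrix (Fin 3) (Fin 3) ℂ)) c)

/-- A representation preserves generator types if the image of the generator `R₁` is a complex
reflection or the identity, and the image of the generator `J` is regular elliptic. -/
def TypePreserving {Γ : Type*} [Group Γ] (ρ : Γ →* PGL3) (J R : Γ) : Prop :=
  (IsComplexReflection (ρ R) ∨ ρ R = 1) ∧ IsRegularElliptic (ρ J)

/-- Two representations are conjugate by an element of `PGL(3,ℂ)`. -/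
def ConjRel {Γ : Type*} [Group Γ] (ρ ρ' : Γ →* PGL3) : Prop :=
  ∃ g : PGL3, ∀ γ : Γ, ρ' γ = g * ρ γ * g⁻¹

/-- Generators of the two-generator presentations of the 3-fold Deligne-Mostow lattices. -/
inductive Gen2 | J | R

/-- Relators of the two-generator presentation of type two Deligne-Mostow lattices:
`J³ = R₁ᵖ = (R₁J)²ᵏ = (R₁J²)²ˡ = 1` and
`R₁ J R₁ J² R₁ J R₁^(p-1) J² R₁^(p-1) J R₁^(p-1) J² = 1`. -/
def relsTwo (p k l : ℕ) : Set (FreeGroup Gen2) :=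
  { (FreeGroup.of Gen2.J) ^ 3, (FreeGroup.of Gen2.R) ^ p,
    (FreeGroup.of Gen2.R * FreeGroup.of Gen2.J) ^ (2 * k),
    (FreeGroup.of Gen2.R * (FreeGroup.of Gen2.J) ^ 2) ^ (2 * l),
    FreeGroup.of Gen2.R * FreeGroup.of Gen2.J * FreeGroup.of Gen2.R *
      (FreeGroup.of Gen2.J) ^ 2 * FreeGroup.of Gen2.R * FreeGroup.of Gen2.J *
      (FreeGroup.of Gen2.R) ^ (p - 1) * (FreeGroup.of Gen2.J) ^ 2 *
      (FreeGroup.of Gen2.R) ^ (p - 1) * FreeGroup.of Gen2.J *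
      (FreeGroup.of Gen2.R) ^ (p - 1) * (FreeGroup.of Gen2.J) ^ 2 }

/-- The type two Deligne-Mostow group `Γ₂(p,k)`, with `l` the positive integer satisfying
`1/l = 1/2 - 1/p - 1/k`. -/
abbrev GammaTwo (p k l : ℕ) := PresentedGroup (relsTwo p k l)

/-- Relators of the two-generator presentation of type three Deligne-Mostow lattices:
`J³ = R₁ᵖ = (R₁J)²ᵏ = (R₁JR₁J²)³ᵈ = 1` and
`R₁ J R₁ J² R₁ J R₁^(p-1) J² R₁^(p-1) J R₁^(p-1) J² = 1`. -/
def relsThree (p k d : ℕ) : Set (FreeGroup Gen2) :=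
  { (FreeGroup.of Gen2.J) ^ 3, (FreeGroup.of Gen2.R) ^ p,
    (FreeGroup.of Gen2.R * FreeGroup.of Gen2.J) ^ (2 * k),
    (FreeGroup.of Gen2.R * FreeGroup.of Gen2.J * FreeGroup.of Gen2.R *
      (FreeGroup.of Gen2.J) ^ 2) ^ (3 * d),
    FreeGroup.of Gen2.R * FreeGroup.of Gen2.J * FreeGroup.of Gen2.R *
      (FreeGroup.of Gen2.J) ^ 2 * FreeGroup.of Gen2.R * FreeGroup.of Gen2.J *
      (FreeGroup.of Gen2.R) ^ (p - 1) * (FreeGroup.of Gen2.J) ^ 2 *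
      (FreeGroup.of Gen2.R) ^ (p - 1) * FreeGroup.of Gen2.J *
      (FreeGroup.of Gen2.R) ^ (p - 1) * (FreeGroup.of Gen2.J) ^ 2 }

/-- The type three Deligne-Mostow group `Γ₃(p,k)`, with `d` the positive integer satisfying
`1/d = 1/2 - 3/p`. -/
abbrev GammaThree (p k d : ℕ) := PresentedGroup (relsThree p k d)

/-- Relators of the two-generator presentation of type four Deligne-Mostow lattices:
`J³ = R₁ᵖ = (R₁J)²ᵏ = (R₁J²)²ˡ = (R₁JR₁J²)³ᵈ = 1` and
`R₁ J R₁ J² R₁ J R₁^(p-1) J² R₁^(p-1) J R₁^(p-1) J² = 1`. -/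
def relsFour (p k l d : ℕ) : Set (FreeGroup Gen2) :=
  { (FreeGroup.of Gen2.J) ^ 3, (FreeGroup.of Gen2.R) ^ p,
    (FreeGroup.of Gen2.R * FreeGroup.of Gen2.J) ^ (2 * k),
    (FreeGroup.of Gen2.R * (FreeGroup.of Gen2.J) ^ 2) ^ (2 * l),
    (FreeGroup.of Gen2.R * FreeGroup.of Gen2.J * FreeGroup.of Gen2.R *
      (FreeGroup.of Gen2.J) ^ 2) ^ (3 * d),
    FreeGroup.of Gen2.R * FreeGroup.of Gen2.J * FreeGroup.of Gen2.R *
      (FreeGroup.of Gen2.J) ^ 2 * FreeGroup.of Gen2.R * FreeGroup.of Gen2.J *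
      (FreeGroup.of Gen2.R) ^ (p - 1) * (FreeGroup.of Gen2.J) ^ 2 *
      (FreeGroup.of Gen2.R) ^ (p - 1) * FreeGroup.of Gen2.J *
      (FreeGroup.of Gen2.R) ^ (p - 1) * (FreeGroup.of Gen2.J) ^ 2 }

/-- The type four Deligne-Mostow group `Γ₄(p,k)`, with `l`, `d` the positive integers satisfying
`1/l = 1/2 - 1/p - 1/k` and `1/d = 1/2 - 3/p`. -/
abbrev GammaFour (p k l d : ℕ) := PresentedGroup (relsFour p k l d)

open Matrix in
theorem aux_trace_finite (N : ℕ) (hN : 0 < N) :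
    {t : ℂ | ∃ A : Matrix (Fin 3) (Fin 3) ℂ, A ^ N = 1 ∧ A.trace = t}.Finite := by
  have hF : {z : ℂ | z ^ N = 1}.Finite := by
    refine (Polynomial.nthRoots N (1:ℂ)).toFinset.finite_toSet.subset ?_
    intro z hz
    simpa [Polynomial.mem_nthRoots hN] using hz
  refine ((hF.prod (hF.prod hF)).image (fun q : ℂ × ℂ × ℂ => q.1 + q.2.1 + q.2.2)).subset ?_
  rintro t ⟨A, hA, rfl⟩
  have hroot : ∀ z ∈ A.charpoly.roots, z ^ N = 1 := by
    intro z hz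
    have h1 : z ∈ spectrum ℂ A :=
      Matrix.mem_spectrum_of_isRoot_charpoly (Polynomial.isRoot_of_mem_roots hz)
    have h2 := spectrum.pow_mem_pow A N h1
    rw [hA, spectrum.one_eq] at h2
    exact h2
  have hcard : Multiset.card A.charpoly.roots = 3 := by
    rw [← (IsAlgClosed.splits A.charpoly).natDegree_eq_card_roots, Matrix.charpoly_natDegree_eq_dim]
    simp
  obtain ⟨a, b, c, habc⟩ := Multiset.card_eq_three.1 hcard
  rw [Matrix.trace_eq_sum_roots_charpoly, habc]
  rw [habc] at hroot
  refine ⟨(a, b, c), ⟨hroot a (by simp), hroot b (by simp), hroot c (by simp)⟩, ?_⟩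
  simp [add_assoc]

theorem aux_mk_eq (A B : GL3) : (QuotientGroup.mk A : PGL3) = QuotientGroup.mk B ↔
    ∃ c : ℂ, c ≠ 0 ∧ (B : Matrix (Fin 3) (Fin 3) ℂ) = c • (A : Matrix (Fin 3) (Fin 3) ℂ) := by
  rw [QuotientGroup.eq]
  constructor
  · rintro ⟨c, hc⟩
    refine ⟨c, c.ne_zero, ?_⟩
    have : B = A * (Units.map (Matrix.scalar (Fin 3)).toMonoidHom c) := by rw [hc]; group
    rw [this]
    have h2 : ((Units.map (Matrix.scalar (Fin 3)).toMonoidHom c : GL3) : Matrix (Fin 3) (Fin 3) ℂ)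
      = (c : ℂ) • (1 : Matrix (Fin 3) (Fin 3) ℂ) := by
      change Matrix.scalar (Fin 3) (c : ℂ) = _
      ext i j; simp [Matrix.scalar_apply, Matrix.diagonal_apply, Matrix.one_apply]
    rw [Units.val_mul, h2]; simp
  · rintro ⟨c, hc, h⟩
    refine ⟨Units.mk0 c hc, ?_⟩
    rw [eq_inv_mul_iff_mul_eq]
    apply Units.ext
    rw [Units.val_mul, h]
    change (A : Matrix (Fin 3) (Fin 3) ℂ) * Matrix.scalar (Fin 3) c = _
    rw [Matrix.scalar_apply, ← Matrix.smul_one_eq_diagonal]; simp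

theorem aux_rank_one (N : Matrix (Fin 3) (Fin 3) ℂ)
    (h : Module.finrank ℂ (LinearMap.ker N.mulVecLin) = 2) :
    ∃ v φ : Fin 3 → ℂ, N = Matrix.vecMulVec v φ := by
  have h1 := LinearMap.finrank_range_add_finrank_ker N.mulVecLin
  rw [h] at h1
  have h2 : Module.finrank ℂ (LinearMap.range N.mulVecLin) = 1 := by
    simp at h1; omega
  obtain ⟨v, hv, hall⟩ := finrank_eq_one_iff'.1 h2
  have : ∀ j : Fin 3, ∃ c : ℂ, N.mulVec (Pi.single j 1) = c • (v : Fin 3 → ℂ) := by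
    intro j
    obtain ⟨c, hc⟩ := hall ⟨N.mulVec (Pi.single j 1), ⟨Pi.single j 1, rfl⟩⟩
    exact ⟨c, (congrArg Subtype.val hc).symm⟩
  choose φ hφ using this
  refine ⟨v, φ, ?_⟩
  ext i j
  have := congrFun (hφ j) i
  simp at this
  simp [Matrix.vecMulVec_apply, this, mul_comm]

/-- Lift of the reflection. -/
theorem aux_lift_R (p : ℕ) (x : PGL3) (hx : IsComplexReflection x ∨ x = 1) (hp : x ^ p = 1) :
    ∃ (A : GL3) (v φ : Fin 3 → ℂ), (QuotientGroup.mk A : PGL3) = x ∧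
      (A : Matrix (Fin 3) (Fin 3) ℂ) = 1 + Matrix.vecMulVec v φ ∧
      (A : Matrix (Fin 3) (Fin 3) ℂ) ^ p = 1 := by
  rcases hx with ⟨M, rfl, -, -, μ, hμ⟩ | rfl
  · have hker : LinearMap.ker ((M : Matrix (Fin 3) (Fin 3) ℂ) - μ • 1).mulVecLin =
        Module.End.eigenspace (Matrix.mulVecLin (M : Matrix (Fin 3) (Fin 3) ℂ)) μ := by
      ext w
      simp [sub_eq_zero]
    obtain ⟨v, φ, hvφ⟩ := aux_rank_one _ (by rw [hker]; exact hμ)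
    have hne : Nontrivial (Module.End.eigenspace (Matrix.mulVecLin (M : Matrix (Fin 3) (Fin 3) ℂ)) μ) :=
      Module.nontrivial_of_finrank_pos (R := ℂ) (by omega)
    obtain ⟨⟨w, hw⟩, hw0⟩ := exists_ne (0 : Module.End.eigenspace (Matrix.mulVecLin (M : Matrix (Fin 3) (Fin 3) ℂ)) μ)
    have hw0 : w ≠ 0 := by simpa using hw0
    have hMw : (M : Matrix (Fin 3) (Fin 3) ℂ).mulVec w = μ • w := by
      simpa [Module.End.mem_eigenspace_iff] using hw
    have hμ0 : μ ≠ 0 := by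
      rintro rfl
      apply hw0
      have := congrArg ((M⁻¹ : GL3) : Matrix (Fin 3) (Fin 3) ℂ).mulVec hMw
      rw [Matrix.mulVec_mulVec, ← Units.val_mul] at this
      simpa using this
    have hM : (M : Matrix (Fin 3) (Fin 3) ℂ) = μ • 1 + Matrix.vecMulVec v φ := by
      rw [← hvφ]; simp
    let A : GL3 := (Units.map (Matrix.scalar (Fin 3)).toMonoidHom (Units.mk0 μ⁻¹ (inv_ne_zero hμ0))) * M
    have hA : (A : Matrix (Fin 3) (Fin 3) ℂ) = μ⁻¹ • (M : Matrix (Fin 3) (Fin 3) ℂ) := by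
      change Matrix.scalar (Fin 3) μ⁻¹ * (M : Matrix (Fin 3) (Fin 3) ℂ) = _
      rw [Matrix.scalar_apply, ← Matrix.smul_one_eq_diagonal]; simp
    have hAM : (QuotientGroup.mk A : PGL3) = QuotientGroup.mk M := by
      rw [aux_mk_eq]; exact ⟨μ, hμ0, by rw [hA, smul_smul, mul_inv_cancel₀ hμ0, one_smul]⟩
    have hA2 : (A : Matrix (Fin 3) (Fin 3) ℂ) = 1 + Matrix.vecMulVec v (μ⁻¹ • φ) := by
      rw [hA, hM, smul_add, smul_smul, inv_mul_cancel₀ hμ0, one_smul, Matrix.vecMulVec_smul]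
    refine ⟨A, v, μ⁻¹ • φ, hAM, hA2, ?_⟩
    rw [← hAM, ← QuotientGroup.mk_pow, eq_comm, ← QuotientGroup.mk_one, aux_mk_eq] at hp
    obtain ⟨c, hc0, hc⟩ := hp
    rw [Units.val_pow_eq_pow_val, Units.val_one] at hc
    have hAw : (A : Matrix (Fin 3) (Fin 3) ℂ).mulVec w = w := by
      rw [hA, Matrix.smul_mulVec, hMw, smul_smul, inv_mul_cancel₀ hμ0, one_smul]
    have hApw : ∀ n : ℕ, ((A : Matrix (Fin 3) (Fin 3) ℂ) ^ n).mulVec w = w := by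
      intro n
      induction n with
      | zero => simp
      | succ n ih => rw [pow_succ, ← Matrix.mulVec_mulVec, hAw, ih]
    have h1 := hApw p
    rw [hc, Matrix.smul_mulVec, Matrix.one_mulVec] at h1
    have : c = 1 := by
      have h2 : (c - 1) • w = 0 := by rw [sub_smul, h1]; simp
      rcases smul_eq_zero.1 h2 with h | h
      · linear_combination h
      · exact absurd h hw0
    rw [hc, this, one_smul]
  · exact ⟨1, 0, 0, rfl, by simp, by simp⟩

/-- Simultaneous diagonalization data for `J`. -/
theorem aux_lift_J (x : PGL3) (hx : IsRegularElliptic x) (h3 : x ^ 3 = 1) :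
    ∃ (P D : GL3) (β : ℂ), β ^ 2 + β + 1 = 0 ∧
      (D : Matrix (Fin 3) (Fin 3) ℂ) = Matrix.diagonal ![1, β, β ^ 2] ∧
      QuotientGroup.mk P * x * (QuotientGroup.mk P)⁻¹ = (QuotientGroup.mk D : PGL3) := by
  obtain ⟨M, rfl, -, a, b, c, hab, hac, hbc, ha, hb, hc⟩ := hx
  obtain ⟨u, hu⟩ := ha.exists_hasEigenvector
  obtain ⟨v, hv⟩ := hb.exists_hasEigenvector
  obtain ⟨w, hw⟩ := hc.exists_hasEigenvector
  rw [← QuotientGroup.mk_pow, eq_comm, ← QuotientGroup.mk_one, aux_mk_eq] at h3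
  obtain ⟨m, hm0, hm⟩ := h3
  rw [Units.val_pow_eq_pow_val, Units.val_one] at hm
  have cube : ∀ (s : ℂ) (y : Fin 3 → ℂ), Module.End.HasEigenvector (Matrix.mulVecLin (M : Matrix (Fin 3) (Fin 3) ℂ)) s y → s ^ 3 = m := by
    intro s y hy
    have h1 : (M : Matrix (Fin 3) (Fin 3) ℂ).mulVec y = s • y := by simpa using hy.apply_eq_smul
    have h2 : ((M : Matrix (Fin 3) (Fin 3) ℂ) ^ 3).mulVec y = s ^ 3 • y := by
      rw [pow_succ, pow_succ, pow_one, ← Matrix.mulVec_mulVec, h1, Matrix.mulVec_smul,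
        ← Matrix.mulVec_mulVec, h1, Matrix.mulVec_smul, h1, smul_smul, smul_smul]
      congr 1; ring
    rw [hm, Matrix.smul_mulVec, Matrix.one_mulVec] at h2
    have h3 : (s ^ 3 - m) • y = 0 := by rw [sub_smul, h2]; simp
    rcases smul_eq_zero.1 h3 with h | h
    · linear_combination h
    · exact absurd h hy.2
  have ca := cube a u hu
  have cb := cube b v hv
  have cc := cube c w hw
  have ha0 : a ≠ 0 := by rintro rfl; apply hm0; rw [← ca]; ring
  have hab' : a ^ 2 + a * b + b ^ 2 = 0 := by
    have : (a - b) * (a ^ 2 + a * b + b ^ 2) = 0 := by linear_combination ca - cb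
    exact (mul_eq_zero.1 this).resolve_left (sub_ne_zero.2 hab)
  have hac' : a ^ 2 + a * c + c ^ 2 = 0 := by
    have : (a - c) * (a ^ 2 + a * c + c ^ 2) = 0 := by linear_combination ca - cc
    exact (mul_eq_zero.1 this).resolve_left (sub_ne_zero.2 hac)
  have hsum : a + b + c = 0 := by
    have : (b - c) * (a + b + c) = 0 := by linear_combination hab' - hac'
    exact (mul_eq_zero.1 this).resolve_left (sub_ne_zero.2 hbc)
  set β := b / a with hβ
  have hbβ : b = a * β := by rw [hβ]; field_simp
  have hβ2 : β ^ 2 + β + 1 = 0 := by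
    have : a ^ 2 * (β ^ 2 + β + 1) = 0 := by rw [hbβ] at hab'; linear_combination hab'
    exact (mul_eq_zero.1 this).resolve_left (pow_ne_zero 2 ha0)
  have hcβ : c = a * β ^ 2 := by
    rw [hbβ] at hsum; linear_combination hsum - a * hβ2
  have hβ3 : β ^ 3 = 1 := by linear_combination (β - 1) * hβ2
  have hli : LinearIndependent ℂ ![u, v, w] := by
    refine Module.End.eigenvectors_linearIndependent' (Matrix.mulVecLin (M : Matrix (Fin 3) (Fin 3) ℂ))
      ![a, b, c] ?_ _ ?_
    · intro i j hij
      revert hij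
      fin_cases i <;> fin_cases j <;> simp [hab, hac, hbc, hab.symm, hac.symm, hbc.symm]
    · intro i
      fin_cases i
      · exact hu
      · exact hv
      · exact hw
  let Q : Matrix (Fin 3) (Fin 3) ℂ := (Matrix.of ![u, v, w]).transpose
  have hQ : IsUnit Q := by
    rw [Matrix.isUnit_transpose]
    rw [← Matrix.linearIndependent_rows_iff_isUnit]
    exact hli
  obtain ⟨Q', hQ'⟩ := hQ
  let D : GL3 := ⟨Matrix.diagonal ![1, β, β ^ 2], Matrix.diagonal ![1, β ^ 2, β],
    by rw [Matrix.diagonal_mul_diagonal, ← Matrix.diagonal_one]; congr 1; ext i; fin_cases i <;> simp <;> linear_combination hβ3,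
    by rw [Matrix.diagonal_mul_diagonal, ← Matrix.diagonal_one]; congr 1; ext i; fin_cases i <;> simp <;> linear_combination hβ3⟩
  have hMQ : (M : Matrix (Fin 3) (Fin 3) ℂ) * Q = a • (Q * Matrix.diagonal ![1, β, β ^ 2]) := by
    have e1 : (M : Matrix (Fin 3) (Fin 3) ℂ).mulVec u = a • u := by simpa using hu.apply_eq_smul
    have e2 : (M : Matrix (Fin 3) (Fin 3) ℂ).mulVec v = b • v := by simpa using hv.apply_eq_smul
    have e3 : (M : Matrix (Fin 3) (Fin 3) ℂ).mulVec w = c • w := by simpa using hw.apply_eq_smul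
    rw [hbβ] at e2
    rw [hcβ] at e3
    ext i j
    rw [Matrix.smul_apply, Matrix.mul_diagonal]
    fin_cases j
    · have := congrFun e1 i
      rw [Pi.smul_apply] at this
      refine Eq.trans this ?_
      simp [Q]
    · have := congrFun e2 i
      rw [Pi.smul_apply] at this
      refine Eq.trans this ?_
      simp [Q]; ring
    · have := congrFun e3 i
      rw [Pi.smul_apply] at this
      refine Eq.trans this ?_
      simp [Q]; ring
  refine ⟨Q'⁻¹, D, β, hβ2, rfl, ?_⟩
  rw [← QuotientGroup.mk_inv, ← QuotientGroup.mk_mul, ← QuotientGroup.mk_mul, eq_comm, aux_mk_eq]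
  refine ⟨a, ha0, ?_⟩
  rw [inv_inv, mul_assoc, Units.val_mul, Units.val_mul, hQ', hMQ, Matrix.mul_smul, ← mul_assoc, ← hQ',
    ← Units.val_mul, inv_mul_cancel]
  simp [D]

theorem aux_roots_finite (N : ℕ) (hN : 0 < N) : {z : ℂ | z ^ N = 1}.Finite := by
  refine (Polynomial.nthRoots N (1:ℂ)).toFinset.finite_toSet.subset ?_
  intro z hz
  simpa [Polynomial.mem_nthRoots hN] using hz

/-- The products of the coordinates of the reflection data take finitely many values. -/
theorem aux_entries_finite (p N : ℕ) (hp : 0 < p) (hN : 0 < N) :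
    ∃ X : Set ℂ, X.Finite ∧ ∀ (β : ℂ) (v φ : Fin 3 → ℂ), β ^ 2 + β + 1 = 0 →
      (1 + Matrix.vecMulVec v φ) ^ p = 1 →
      ((1 + Matrix.vecMulVec v φ) * Matrix.diagonal ![1, β, β ^ 2]) ^ N = 1 →
      ∀ i, v i * φ i ∈ X := by
  refine ⟨_, ((aux_roots_finite 3 (by norm_num)).prod ((aux_trace_finite p hp).prod
    ((aux_trace_finite N hN).prod (aux_trace_finite N hN)))).image
    (fun q : ℂ × ℂ × ℂ × ℂ =>
      ((q.2.1 - 3) + q.1 ^ 2 * q.2.2.1 - q.1 * ((q.2.1 - 2) * q.2.2.2)) / 3), ?_⟩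
  intro β v φ hβ hA hAD
  have hβ3 : β ^ 3 = 1 := by linear_combination (β - 1) * hβ
  set P := Matrix.vecMulVec v φ with hP
  set D : Matrix (Fin 3) (Fin 3) ℂ := Matrix.diagonal ![1, β, β ^ 2] with hD
  set a : ℂ := φ ⬝ᵥ v with ha
  have ha' : a = v 0 * φ 0 + v 1 * φ 1 + v 2 * φ 2 := by
    simp [ha, dotProduct, Fin.sum_univ_three]; ring
  have hPP : P * P = a • P := by
    rw [hP, Matrix.vecMulVec_mul_vecMulVec, Matrix.vecMulVec_smul]
  set B := ((1 + P) * D) ^ (N - 1) with hB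
  have hBr : ((1 + P) * D) * B = 1 := by
    rw [hB, ← pow_succ', Nat.sub_add_cancel hN, hAD]
  have hBN : B ^ N = 1 := by rw [hB, ← pow_mul, mul_comm, pow_mul, hAD, one_pow]
  set D' : Matrix (Fin 3) (Fin 3) ℂ := Matrix.diagonal ![1, β ^ 2, β] with hD'
  have hDD : D' * D = 1 := by
    rw [hD, hD', Matrix.diagonal_mul_diagonal, ← Matrix.diagonal_one]
    congr 1; ext i; fin_cases i <;> simp <;> linear_combination hβ3
  have hY : D' * ((1 + a) • 1 - P) = (1 + a) • B := by
    have h1 : ((1 + a) • 1 - P) * (1 + P) = (1 + a) • 1 := by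
      rw [sub_mul, mul_add, mul_add, hPP, smul_mul_assoc, one_mul, mul_one, smul_mul_assoc, one_mul]
      simp only [add_smul, one_smul]
      abel
    have h2 : D' * ((1 + a) • 1 - P) * ((1 + P) * D) = (1 + a) • 1 := by
      rw [mul_assoc, ← mul_assoc _ (1 + P) D, h1, smul_mul_assoc, one_mul, mul_smul_comm, hDD]
    calc D' * ((1 + a) • 1 - P) = D' * ((1 + a) • 1 - P) * (((1 + P) * D) * B) := by rw [hBr, mul_one]
      _ = (D' * ((1 + a) • 1 - P) * ((1 + P) * D)) * B := by simp only [mul_assoc]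
      _ = _ := by rw [h2, smul_mul_assoc, one_mul]
  have t1 : (1 + P).trace = 3 + a := by
    rw [Matrix.trace_add, hP, Matrix.trace_vecMulVec, dotProduct_comm]; simp [ha]
  have t2 : ((1 + P) * D).trace = v 0 * φ 0 + β * (v 1 * φ 1) + β ^ 2 * (v 2 * φ 2) := by
    rw [Matrix.trace, Fin.sum_univ_three]
    simp only [Matrix.diag_apply, hD, Matrix.mul_diagonal, Matrix.add_apply, hP, Matrix.vecMulVec_apply]
    simp
    linear_combination hβ
  have t3 : (1 + a) * B.trace = -(v 0 * φ 0 + β ^ 2 * (v 1 * φ 1) + β * (v 2 * φ 2)) := by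
    have := congrArg Matrix.trace hY
    rw [Matrix.trace_smul, smul_eq_mul] at this
    rw [← this, Matrix.trace, Fin.sum_univ_three]
    simp only [Matrix.diag_apply, hD', Matrix.diagonal_mul, Matrix.sub_apply, hP, Matrix.vecMulVec_apply, Matrix.smul_apply]
    simp
    linear_combination (1 + a) * hβ
  have m1 : (1 + P).trace ∈ {t : ℂ | ∃ A : Matrix (Fin 3) (Fin 3) ℂ, A ^ p = 1 ∧ A.trace = t} := ⟨_, hA, rfl⟩
  have m2 : ((1 + P) * D).trace ∈ {t : ℂ | ∃ A : Matrix (Fin 3) (Fin 3) ℂ, A ^ N = 1 ∧ A.trace = t} := ⟨_, hAD, rfl⟩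
  have m3 : B.trace ∈ {t : ℂ | ∃ A : Matrix (Fin 3) (Fin 3) ℂ, A ^ N = 1 ∧ A.trace = t} := ⟨_, hBN, rfl⟩
  have hβ4 : β ^ 4 = β := by linear_combination β * hβ3
  have t3' : ((1 + P).trace - 2) * B.trace = -(v 0 * φ 0 + β ^ 2 * (v 1 * φ 1) + β * (v 2 * φ 2)) := by
    rw [← t3, t1]; ring
  intro i
  fin_cases i
  · refine ⟨(1, (1 + P).trace, ((1 + P) * D).trace, B.trace), ⟨?_, m1, m2, m3⟩, ?_⟩
    · simp
    · simp only [t3']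
      rw [t1, t2, ha']
      simp only [Fin.zero_eta]
      linear_combination (v 1 * φ 1 + v 2 * φ 2) / 3 * hβ
  · refine ⟨(β, (1 + P).trace, ((1 + P) * D).trace, B.trace), ⟨hβ3, m1, m2, m3⟩, ?_⟩
    simp only [t3']
    rw [t1, t2, ha']
    simp only [Fin.mk_one]
    linear_combination (v 0 * φ 0) / 3 * hβ + (v 1 * φ 1) * 2 / 3 * hβ3 + (v 2 * φ 2) / 3 * (hβ4 + hβ)
  · refine ⟨(β ^ 2, (1 + P).trace, ((1 + P) * D).trace, B.trace), ⟨?_, m1, m2, m3⟩, ?_⟩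
    · change (β ^ 2) ^ 3 = 1
      rw [← pow_mul, mul_comm, pow_mul, hβ3, one_pow]
    simp only [t3']
    rw [t1, t2, ha']
    simp only [Fin.reduceFinMk]
    linear_combination (v 0 * φ 0) / 3 * (hβ + hβ4) + (v 1 * φ 1) / 3 * (hβ + hβ4 + β * hβ4) + (v 2 * φ 2) / 3 * ((β ^ 3 + 2) * hβ3)

/-- Normal form of a type-preserving pair. -/
theorem aux_normal_form (p k : ℕ) (hp : 0 < p) (hk : 0 < k) :
    ∃ T : Set (PGL3 × PGL3), T.Finite ∧ ∀ x y : PGL3, IsRegularElliptic x →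
      (IsComplexReflection y ∨ y = 1) → x ^ 3 = 1 → y ^ p = 1 → (y * x) ^ (2 * k) = 1 →
      ∃ g : PGL3, (g * x * g⁻¹, g * y * g⁻¹) ∈ T := by
  obtain ⟨X, hX, hXmem⟩ := aux_entries_finite p (2 * k * (3 * p)) hp (by positivity)
  set F : Set ℂ := X ∪ {0, 1} with hFdef
  have hF : F.Finite := hX.union (by simp)
  have hF3 : (Set.univ.pi (fun _ : Fin 3 => F)).Finite := Set.Finite.pi' (fun _ => hF) |>.subset (by
    intro f hf i; exact hf i trivial)
  let TM : Set (Matrix (Fin 3) (Fin 3) ℂ × Matrix (Fin 3) (Fin 3) ℂ) :=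
    (fun q : ℂ × (Fin 3 → ℂ) × (Fin 3 → ℂ) =>
      (Matrix.diagonal ![1, q.1, q.1 ^ 2], 1 + Matrix.vecMulVec q.2.1 q.2.2)) ''
      ({z : ℂ | z ^ 3 = 1} ×ˢ (Set.univ.pi (fun _ : Fin 3 => F)) ×ˢ (Set.univ.pi (fun _ : Fin 3 => F)))
  have hTM : TM.Finite := ((aux_roots_finite 3 (by norm_num)).prod (hF3.prod hF3)).image _
  let TG : Set (GL3 × GL3) := (fun q : GL3 × GL3 => ((q.1 : Matrix (Fin 3) (Fin 3) ℂ), (q.2 : Matrix (Fin 3) (Fin 3) ℂ))) ⁻¹' TM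
  have hTG : TG.Finite := hTM.preimage (by
    rintro ⟨a, b⟩ - ⟨c, d⟩ - h
    simp only [Prod.mk.injEq] at h
    exact Prod.ext (Units.ext h.1) (Units.ext h.2))
  refine ⟨(fun q : GL3 × GL3 => ((QuotientGroup.mk q.1 : PGL3), (QuotientGroup.mk q.2 : PGL3))) '' TG, hTG.image _, ?_⟩
  intro x y hx hy hx3 hyp hyx
  obtain ⟨P, D, β, hβ, hD, hPD⟩ := aux_lift_J x hx hx3
  have hβ3 : β ^ 3 = 1 := by linear_combination (β - 1) * hβ
  obtain ⟨A₀, v₀, φ₀, rfl, hA₀, hA₀p⟩ := aux_lift_R p y hy hyp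
  set A : GL3 := P * A₀ * P⁻¹ with hAdef
  set v : Fin 3 → ℂ := (P : Matrix (Fin 3) (Fin 3) ℂ).mulVec v₀ with hv
  set φ : Fin 3 → ℂ := Matrix.vecMul φ₀ ((P⁻¹ : GL3) : Matrix (Fin 3) (Fin 3) ℂ) with hφ
  have hA : (A : Matrix (Fin 3) (Fin 3) ℂ) = 1 + Matrix.vecMulVec v φ := by
    rw [hAdef, Units.val_mul, Units.val_mul, hA₀, mul_add, add_mul, mul_one, ← Units.val_mul,
      mul_inv_cancel, Units.val_one, Matrix.mul_vecMulVec, Matrix.vecMulVec_mul]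
  have hAp : A ^ p = 1 := by
    have : A₀ ^ p = 1 := Units.ext (by rw [Units.val_pow_eq_pow_val, hA₀p, Units.val_one])
    rw [hAdef, conj_pow, this]; simp
  have hAp' : (A : Matrix (Fin 3) (Fin 3) ℂ) ^ p = 1 := by
    rw [← Units.val_pow_eq_pow_val, hAp, Units.val_one]
  have hAD : ((A : Matrix (Fin 3) (Fin 3) ℂ) * D) ^ (2 * k * (3 * p)) = 1 := by
    have h1 : (QuotientGroup.mk ((A * D) ^ (2 * k)) : PGL3) = QuotientGroup.mk 1 := by
      have e : (QuotientGroup.mk (A * D) : PGL3)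
          = QuotientGroup.mk P * (QuotientGroup.mk A₀ * x) * (QuotientGroup.mk P)⁻¹ := by
        rw [QuotientGroup.mk_mul, ← hPD, hAdef, QuotientGroup.mk_mul, QuotientGroup.mk_mul, QuotientGroup.mk_inv]
        group
      rw [QuotientGroup.mk_pow, e, conj_pow, hyx]; simp
    rw [eq_comm, aux_mk_eq] at h1
    obtain ⟨m, hm0, hm⟩ := h1
    rw [Units.val_pow_eq_pow_val, Units.val_mul, Units.val_one] at hm
    have hdetD : (D : Matrix (Fin 3) (Fin 3) ℂ).det = 1 := by
      rw [hD, Matrix.det_diagonal, Fin.prod_univ_three]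
      simp; linear_combination hβ3
    have hdetA : (A : Matrix (Fin 3) (Fin 3) ℂ).det ^ p = 1 := by
      rw [← Matrix.det_pow, hAp', Matrix.det_one]
    have hd := congrArg Matrix.det hm
    rw [Matrix.det_pow, Matrix.det_mul, hdetD, mul_one, Matrix.det_smul, Matrix.det_one, mul_one, Fintype.card_fin] at hd
    have hmp : m ^ (3 * p) = 1 := by
      rw [pow_mul, ← hd, ← pow_mul, mul_comm, pow_mul, hdetA, one_pow]
    rw [pow_mul, hm, smul_pow, one_pow, hmp, one_smul]
  have hx := hXmem β v φ hβ (by rw [← hA]; exact hAp') (by rw [← hA, ← hD]; exact hAD)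
  let t : Fin 3 → ℂ := fun i => if v i ≠ 0 then v i else if φ i ≠ 0 then (φ i)⁻¹ else 1
  have ht : ∀ i, t i ≠ 0 := by
    intro i
    simp only [t]
    split_ifs with h1 h2
    · exact h1
    · exact inv_ne_zero h2
    · exact one_ne_zero
  let S : GL3 := ⟨Matrix.diagonal (fun i => (t i)⁻¹), Matrix.diagonal t,
    by rw [Matrix.diagonal_mul_diagonal, ← Matrix.diagonal_one]; congr 1; ext i; simp [ht i],
    by rw [Matrix.diagonal_mul_diagonal, ← Matrix.diagonal_one]; congr 1; ext i; simp [ht i]⟩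
  have hS : (S : Matrix (Fin 3) (Fin 3) ℂ) = Matrix.diagonal (fun i => (t i)⁻¹) := rfl
  have hS' : ((S⁻¹ : GL3) : Matrix (Fin 3) (Fin 3) ℂ) = Matrix.diagonal t := rfl
  refine ⟨QuotientGroup.mk (S * P), (S * D * S⁻¹, S * A * S⁻¹), ?_, ?_⟩
  · refine ⟨(β, (fun i => (t i)⁻¹ * v i), fun i => φ i * t i), ⟨hβ3, ?_, ?_⟩, ?_⟩
    · intro i _
      simp only [t, hFdef]
      split_ifs with h1 h2
      · right; simp [h1]
      · right; simp [not_not.1 h1]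
      · right; simp [not_not.1 h1]
    · intro i _
      simp only [t, hFdef]
      split_ifs with h1 h2
      · left; rw [mul_comm]; exact hx i
      · right; simp [h2]
      · right; simp [not_not.1 h2]
    · simp only [Units.val_mul, hA, hD, hS, hS', Prod.mk.injEq]
      constructor
      · rw [Matrix.diagonal_mul_diagonal, Matrix.diagonal_mul_diagonal]
        congr 1; ext i
        have := ht i
        field_simp
      · rw [mul_add, add_mul, mul_one, Matrix.diagonal_mul_diagonal, Matrix.mul_vecMulVec, Matrix.vecMulVec_mul]
        congr 1
        · rw [← Matrix.diagonal_one]; congr 1; ext i; simp [ht i]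
        · ext i j
          simp [Matrix.vecMulVec_apply, Matrix.mulVec_diagonal, Matrix.vecMul_diagonal]
  · simp only [Prod.mk.injEq]
    constructor
    · rw [QuotientGroup.mk_mul, QuotientGroup.mk_mul, ← hPD, QuotientGroup.mk_mul, QuotientGroup.mk_inv]
      group
    · rw [hAdef, ← QuotientGroup.mk_inv, ← QuotientGroup.mk_mul, ← QuotientGroup.mk_mul]
      congr 1
      group

theorem aux_main {rels : Set (FreeGroup Gen2)} (p k : ℕ) (hp : 0 < p) (hk : 0 < k)
    (h1 : (FreeGroup.of Gen2.J) ^ 3 ∈ rels) (h2 : (FreeGroup.of Gen2.R) ^ p ∈ rels)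
    (h3 : (FreeGroup.of Gen2.R * FreeGroup.of Gen2.J) ^ (2 * k) ∈ rels) :
    Finite (Quot (fun (ρ ρ' : {ρ : PresentedGroup rels →* PGL3 //
        TypePreserving ρ (PresentedGroup.of Gen2.J) (PresentedGroup.of Gen2.R)}) =>
      ConjRel ρ.1 ρ'.1)) := by
  obtain ⟨T, hT, hmem⟩ := aux_normal_form p k hp hk
  have e1 : (PresentedGroup.of Gen2.J : PresentedGroup rels) ^ 3 = 1 := by
    have := PresentedGroup.one_of_mem h1
    rwa [map_pow] at this
  have e2 : (PresentedGroup.of Gen2.R : PresentedGroup rels) ^ p = 1 := by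
    have := PresentedGroup.one_of_mem h2
    rwa [map_pow] at this
  have e3 : (PresentedGroup.of Gen2.R * PresentedGroup.of Gen2.J : PresentedGroup rels) ^ (2 * k) = 1 := by
    have := PresentedGroup.one_of_mem h3
    rwa [map_pow, map_mul] at this
  have key : ∀ ρ : {ρ : PresentedGroup rels →* PGL3 //
        TypePreserving ρ (PresentedGroup.of Gen2.J) (PresentedGroup.of Gen2.R)},
      ∃ g : PGL3, (g * ρ.1 (PresentedGroup.of Gen2.J) * g⁻¹, g * ρ.1 (PresentedGroup.of Gen2.R) * g⁻¹) ∈ T := by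
    intro ρ
    apply hmem _ _ ρ.2.2 ρ.2.1
    · rw [← map_pow, e1, map_one]
    · rw [← map_pow, e2, map_one]
    · rw [← map_mul, ← map_pow, e3, map_one]
  choose g hg using key
  have : Finite T := hT
  refine Finite.of_injective (β := T) (fun q => ⟨_, hg q.out⟩) ?_
  intro q q' hqq
  simp only [Subtype.mk.injEq, Prod.mk.injEq] at hqq
  rw [← q.out_eq, ← q'.out_eq]
  apply Quot.sound
  refine ⟨(g q'.out)⁻¹ * g q.out, ?_⟩
  have : q'.out.1 = (MulAut.conj ((g q'.out)⁻¹ * g q.out)).toMonoidHom.comp q.out.1 := by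
    apply PresentedGroup.ext
    intro s
    simp only [MonoidHom.comp_apply, MulAut.conj_apply, MulEquiv.toMonoidHom_eq_coe, MonoidHom.coe_coe]
    have hconj : ∀ a b x y : PGL3, a * x * a⁻¹ = b * y * b⁻¹ → y = b⁻¹ * a * x * (b⁻¹ * a)⁻¹ := by
      intro a b x y h
      calc y = b⁻¹ * (b * y * b⁻¹) * b := by group
        _ = b⁻¹ * (a * x * a⁻¹) * b := by rw [h]
        _ = _ := by group
    cases s
    · exact hconj _ _ _ _ hqq.1
    · exact hconj _ _ _ _ hqq.2
  intro γ
  rw [this]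
  simp [MulAut.conj_apply, mul_assoc]

/-- For each of the listed type two, type three and type four 3-fold Deligne-Mostow lattices,
the set of type-preserving representations into `PGL(3,ℂ)` modulo conjugation is finite. -/
theorem typePreserving_reps_finite :
    (∀ p k l : ℕ, (p, k) ∈ ({(6,4), (6,6), (3,7), (3,8), (3,9), (3,10), (3,12), (4,5), (4,6), (4,8), (5,4), (5,5)} : Set (ℕ × ℕ)) → 0 < l →
      (1 : ℚ) / l = 1 / 2 - 1 / p - 1 / k →
      Finite (Quot (fun (ρ ρ' : {ρ : GammaTwo p k l →* PGL3 //
        TypePreserving ρ (PresentedGroup.of Gen2.J) (PresentedGroup.of Gen2.R)}) =>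
      ConjRel ρ.1 ρ'.1))) ∧
    (∀ p k d : ℕ, (p, k) ∈ ({(7,2), (8,2), (9,2), (10,2), (12,2), (18,2)} : Set (ℕ × ℕ)) → 0 < d →
      (1 : ℚ) / d = 1 / 2 - 3 / p →
      Finite (Quot (fun (ρ ρ' : {ρ : GammaThree p k d →* PGL3 //
        TypePreserving ρ (PresentedGroup.of Gen2.J) (PresentedGroup.of Gen2.R)}) =>
      ConjRel ρ.1 ρ'.1))) ∧
    (∀ p k l d : ℕ, (p, k) ∈ ({(7,3), (8,3), (8,4), (9,3), (10,3), (10,5), (12,3), (12,6), (18,3)} : Set (ℕ × ℕ)) → 0 < l → 0 < d →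
      (1 : ℚ) / l = 1 / 2 - 1 / p - 1 / k → (1 : ℚ) / d = 1 / 2 - 3 / p →
      Finite (Quot (fun (ρ ρ' : {ρ : GammaFour p k l d →* PGL3 //
        TypePreserving ρ (PresentedGroup.of Gen2.J) (PresentedGroup.of Gen2.R)}) =>
      ConjRel ρ.1 ρ'.1))) := by
  refine ⟨?_, ?_, ?_⟩
  · intro p k l hpk _ _
    have hpos : 0 < p ∧ 0 < k := by
      simp only [Set.mem_insert_iff, Set.mem_singleton_iff, Prod.mk.injEq] at hpk
      omega
    exact aux_main p k hpos.1 hpos.2 (by simp [relsTwo]) (by simp [relsTwo]) (by simp [relsTwo])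
  · intro p k d hpk _ _
    have hpos : 0 < p ∧ 0 < k := by
      simp only [Set.mem_insert_iff, Set.mem_singleton_iff, Prod.mk.injEq] at hpk
      omega
    exact aux_main p k hpos.1 hpos.2 (by simp [relsThree]) (by simp [relsThree]) (by simp [relsThree])
  · intro p k l d hpk _ _ _ _
    have hpos : 0 < p ∧ 0 < k := by
      simp only [Set.mem_insert_iff, Set.mem_singleton_iff, Prod.mk.injEq] at hpk
      omega
    exact aux_main p k hpos.1 hpos.2 (by simp [relsFour]) (by simp [relsFour]) (by simp [relsFour])
end
end

section
/- Let Γ be any one of the type three Deligne-Mostow groups Γ₃(p,k) for (p,k) in {(7,2), (8,2), (9,2), (10,2), (12,2), (18,2)}. Then every type-preserving homomorphism ρ: Γ → PGL(3,ℂ) is conjugate in PGL(3,ℂ) to a homomorphism ρ' such that ρ'(J) and ρ'(R₁) admit lifts to GL(3,ℂ) all of whose matrix entries lie in a cyclotomic extension of ℚ inside ℂ, i.e. in ℚ(ζ_n) for some positive integer n, where ζ_n = exp(2πi/n). -/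
noncomputable section

lemma cyc_root_mem {n : ℕ} (hn : 0 < n) {z : ℂ} (hz : z ^ n = 1) :
    z ∈ Algebra.adjoin ℚ {Complex.exp (2 * Real.pi * Complex.I / n)} := by
  have : NeZero n := ⟨hn.ne'⟩
  obtain ⟨i, -, rfl⟩ := (Complex.isPrimitiveRoot_exp n hn.ne').eq_pow_of_pow_eq_one hz
  exact pow_mem (Algebra.subset_adjoin (Set.mem_singleton _)) _

lemma cyc_inv_mem {n : ℕ} (hn : 0 < n) {z : ℂ}
    (hz : z ∈ Algebra.adjoin ℚ {Complex.exp (2 * Real.pi * Complex.I / n)}) :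
    z⁻¹ ∈ Algebra.adjoin ℚ {Complex.exp (2 * Real.pi * Complex.I / n)} := by
  have hζ : IsIntegral ℚ (Complex.exp (2 * Real.pi * Complex.I / n)) :=
    ((Complex.isPrimitiveRoot_exp n hn.ne').isIntegral hn).tower_top
  have h : IsIntegral ℚ z := by
    have hle : Algebra.adjoin ℚ {Complex.exp (2 * Real.pi * Complex.I / n)} ≤
        integralClosure ℚ ℂ := by
      apply Algebra.adjoin_le
      rintro _ rfl
      exact hζ
    exact hle hz
  exact Subalgebra.inv_mem_of_algebraic (x := ⟨z, hz⟩)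
    (Algebra.adjoin ℚ {Complex.exp (2 * Real.pi * Complex.I / n)}) h.isAlgebraic

lemma cyc_trace_mem {n : ℕ} (hn : 0 < n) {X : Matrix (Fin 3) (Fin 3) ℂ} (hX : X ^ n = 1) :
    X.trace ∈ Algebra.adjoin ℚ {Complex.exp (2 * Real.pi * Complex.I / n)} := by
  rw [Matrix.trace_eq_sum_roots_charpoly]
  apply multiset_sum_mem
  intro z hz
  apply cyc_root_mem hn
  have h1 : z ∈ spectrum ℂ X := by
    rw [Matrix.mem_spectrum_iff_isRoot_charpoly]
    exact Polynomial.isRoot_of_mem_roots hz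
  have h2 := spectrum.pow_mem_pow X n h1
  rw [hX, spectrum.one_eq] at h2
  exact h2

/-- The products `v i * f i` are cyclotomic. -/
lemma cyc_core {n : ℕ} (hn : 0 < n) (d v f : Fin 3 → ℂ) (hd : Function.Injective d)
    (hdn : ∀ i, d i ^ n = 1)
    (hX : ((1 + Matrix.vecMulVec v f) * Matrix.diagonal d) ^ n = 1) (i : Fin 3) :
    v i * f i ∈ Algebra.adjoin ℚ {Complex.exp (2 * Real.pi * Complex.I / n)} := by
  set A := Algebra.adjoin ℚ {Complex.exp (2 * Real.pi * Complex.I / n)} with hA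
  have hd0 : ∀ i, d i ≠ 0 := by
    intro i h
    have := hdn i
    rw [h, zero_pow hn.ne'] at this
    exact zero_ne_one this
  have hdA : ∀ i, d i ∈ A := fun i => cyc_root_mem hn (hdn i)
  have hdA' : ∀ i, (d i)⁻¹ ∈ A := fun i => cyc_inv_mem hn (hdA i)
  set x : Fin 3 → ℂ := fun i => v i * f i with hx
  set u : ℂ := 1 + (x 0 + x 1 + x 2) with hu
  have hdet : (1 + Matrix.vecMulVec v f).det = u := by
    simp [Matrix.det_fin_three, Matrix.vecMulVec_apply, hu, hx]
    ring
  have hun : u ^ n = 1 := by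
    have := congrArg Matrix.det hX
    rw [Matrix.det_pow, Matrix.det_mul, hdet, Matrix.det_diagonal, mul_pow, ← Finset.prod_pow] at this
    simpa [hdn] using this
  have hu0 : u ≠ 0 := by
    intro h
    rw [h, zero_pow hn.ne'] at hun
    exact zero_ne_one hun
  have huA : u ∈ A := cyc_root_mem hn hun
  have s0 : x 0 + x 1 + x 2 ∈ A := by
    have : x 0 + x 1 + x 2 = u - 1 := by rw [hu]; ring
    rw [this]; exact sub_mem huA (one_mem _)
  have s1 : d 0 * x 0 + d 1 * x 1 + d 2 * x 2 ∈ A := by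
    have h := cyc_trace_mem hn hX
    have e : d 0 * x 0 + d 1 * x 1 + d 2 * x 2 =
        ((1 + Matrix.vecMulVec v f) * Matrix.diagonal d).trace - (d 0 + d 1 + d 2) := by
      simp [Matrix.trace_fin_three, Matrix.vecMulVec_apply, hx]
      ring
    rw [e]
    exact sub_mem h (add_mem (add_mem (hdA 0) (hdA 1)) (hdA 2))
  have s2 : (d 0)⁻¹ * x 0 + (d 1)⁻¹ * x 1 + (d 2)⁻¹ * x 2 ∈ A := by
    set Y : Matrix (Fin 3) (Fin 3) ℂ :=
      Matrix.diagonal (fun i => (d i)⁻¹) * (1 - u⁻¹ • Matrix.vecMulVec v f) with hY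
    have hD : Matrix.diagonal d * Matrix.diagonal (fun i => (d i)⁻¹) = 1 := by
      rw [Matrix.diagonal_mul_diagonal]
      simp [hd0]
    have hdot : v ⬝ᵥ f = u - 1 := by simp [dotProduct, Fin.sum_univ_three, hu, hx]
    have hR : (1 + Matrix.vecMulVec v f) * (1 - u⁻¹ • Matrix.vecMulVec v f) = 1 := by
      have h2 : Matrix.vecMulVec v f * Matrix.vecMulVec v f = (u - 1) • Matrix.vecMulVec v f := by
        rw [Matrix.vecMulVec_mul_vecMulVec, dotProduct_comm, hdot]
        ext i j
        simp [Matrix.vecMulVec_apply]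
        ring
      rw [add_mul, mul_sub, mul_sub, Matrix.mul_smul, Matrix.mul_smul, h2, one_mul, one_mul, mul_one,
        smul_smul]
      have : u⁻¹ * (u - 1) = 1 - u⁻¹ := by field_simp
      rw [this, sub_smul, one_smul]
      abel
    have hXY : ((1 + Matrix.vecMulVec v f) * Matrix.diagonal d) * Y = 1 := by
      rw [hY, mul_assoc, ← mul_assoc (Matrix.diagonal d), hD, one_mul, hR]
    have hYX := mul_eq_one_comm.mp hXY
    have hYn : Y ^ n = 1 := by
      have hc : Commute ((1 + Matrix.vecMulVec v f) * Matrix.diagonal d) Y := hXY.trans hYX.symm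
      have := hc.mul_pow n
      rw [hXY, hX, one_pow, one_mul] at this
      exact this.symm
    have h := cyc_trace_mem hn hYn
    have e : (d 0)⁻¹ * x 0 + (d 1)⁻¹ * x 1 + (d 2)⁻¹ * x 2 =
        u * (((d 0)⁻¹ + (d 1)⁻¹ + (d 2)⁻¹) - Y.trace) := by
      simp [hY, Matrix.trace_fin_three, Matrix.vecMulVec_apply,
        Matrix.diagonal_mul, hx, -mul_eq_mul_left_iff]
      field_simp
      ring
    rw [e]
    exact mul_mem huA (sub_mem (add_mem (add_mem (hdA' 0) (hdA' 1)) (hdA' 2)) h)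
  have key : ∀ a b c xa xb xc : ℂ, a ∈ A → b ∈ A → c ∈ A → a ≠ 0 → b ≠ 0 → c ≠ 0 →
      a ≠ b → a ≠ c → xa + xb + xc ∈ A → a * xa + b * xb + c * xc ∈ A →
      a⁻¹ * xa + b⁻¹ * xb + c⁻¹ * xc ∈ A → xa ∈ A := by
    intro a b c xa xb xc ha hb hc ha0 hb0 hc0 hab hac h0 h1 h2
    have hab' := sub_ne_zero.mpr hab
    have hac' := sub_ne_zero.mpr hac
    have e : xa = (a * xa + b * xb + c * xc - (b + c) * (xa + xb + xc) +
        b * c * (a⁻¹ * xa + b⁻¹ * xb + c⁻¹ * xc)) * a * (a - b)⁻¹ * (a - c)⁻¹ := by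
      field_simp
      ring
    rw [e]
    exact mul_mem (mul_mem (mul_mem (add_mem (sub_mem h1 (mul_mem (add_mem hb hc) h0))
      (mul_mem (mul_mem hb hc) h2)) ha) (cyc_inv_mem hn (sub_mem ha hb)))
      (cyc_inv_mem hn (sub_mem ha hc))
  have ne : ∀ i j, i ≠ j → d i ≠ d j := fun i j h => hd.ne h
  change x i ∈ A
  fin_cases i
  · exact key (d 0) (d 1) (d 2) (x 0) (x 1) (x 2) (hdA 0) (hdA 1) (hdA 2) (hd0 0) (hd0 1) (hd0 2)
      (ne _ _ (by decide)) (ne _ _ (by decide)) s0 s1 s2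
  · refine key (d 1) (d 0) (d 2) (x 1) (x 0) (x 2) (hdA 1) (hdA 0) (hdA 2) (hd0 1) (hd0 0) (hd0 2)
      (ne _ _ (by decide)) (ne _ _ (by decide)) ?_ ?_ ?_
    · rwa [add_comm (x 1)]
    · rwa [add_comm (d 1 * x 1)]
    · rwa [add_comm ((d 1)⁻¹ * x 1)]
  · refine key (d 2) (d 1) (d 0) (x 2) (x 1) (x 0) (hdA 2) (hdA 1) (hdA 0) (hd0 2) (hd0 1) (hd0 0)
      (ne _ _ (by decide)) (ne _ _ (by decide)) ?_ ?_ ?_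
    · convert s0 using 1; ring
    · convert s1 using 1; ring
    · convert s2 using 1; ring

lemma mk_eq_one_scalar {M : GL3} (h : (QuotientGroup.mk M : PGL3) = 1) :
    ∃ c : ℂ, c ≠ 0 ∧ (M : Matrix (Fin 3) (Fin 3) ℂ) = c • 1 := by
  rw [QuotientGroup.eq_one_iff] at h
  obtain ⟨c, rfl⟩ := h
  refine ⟨c, c.ne_zero, ?_⟩
  change Matrix.scalar (Fin 3) (c : ℂ) = _
  rw [Matrix.scalar_apply, Matrix.smul_one_eq_diagonal]

/-- A complex reflection (or the identity) has a lift of the form `1 + v fᵀ` with a fixed vector. -/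
lemma refl_lift {x : PGL3} (h : IsComplexReflection x ∨ x = 1) :
    ∃ (R : GL3) (v f w : Fin 3 → ℂ), (QuotientGroup.mk R : PGL3) = x ∧
      (R : Matrix (Fin 3) (Fin 3) ℂ) = 1 + Matrix.vecMulVec v f ∧ w ≠ 0 ∧
      (R : Matrix (Fin 3) (Fin 3) ℂ).mulVec w = w := by
  rcases h with ⟨N, hN, -, -, μ, hμ⟩ | rfl
  · obtain ⟨w, hw, hw0⟩ : ∃ w ∈ Module.End.eigenspace
        (Matrix.mulVecLin (N : Matrix (Fin 3) (Fin 3) ℂ)) μ, w ≠ 0 := by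
      apply Submodule.exists_mem_ne_zero_of_ne_bot
      intro hb
      rw [hb] at hμ
      simp at hμ
    rw [Module.End.mem_eigenspace_iff, Matrix.mulVecLin_apply] at hw
    have hμ0 : μ ≠ 0 := by
      rintro rfl
      apply hw0
      have h1 : ((N⁻¹ : GL3) : Matrix (Fin 3) (Fin 3) ℂ).mulVec
          ((N : Matrix (Fin 3) (Fin 3) ℂ).mulVec w) = 0 := by rw [hw]; simp
      rw [Matrix.mulVec_mulVec, ← Units.val_mul, inv_mul_cancel, Units.val_one,
        Matrix.one_mulVec] at h1
      exact h1
    set L := Matrix.mulVecLin (N : Matrix (Fin 3) (Fin 3) ℂ) - algebraMap ℂ (Module.End ℂ (Fin 3 → ℂ)) μ with hL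
    have hr : Module.finrank ℂ (LinearMap.range L) = 1 := by
      have h1 := LinearMap.finrank_range_add_finrank_ker L
      have h2 : LinearMap.ker L =
          Module.End.eigenspace (Matrix.mulVecLin (N : Matrix (Fin 3) (Fin 3) ℂ)) μ := by
        ext y
        rw [Module.End.mem_eigenspace_iff, LinearMap.mem_ker, hL, LinearMap.sub_apply, sub_eq_zero,
          Module.algebraMap_end_apply]
      rw [h2, hμ] at h1
      simp at h1
      omega
    obtain ⟨v, -, hv⟩ := finrank_eq_one_iff'.mp hr
    choose f hf using fun j : Fin 3 => hv ⟨L (Pi.single j 1), LinearMap.mem_range_self _ _⟩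
    have hent : ∀ i j, (N : Matrix (Fin 3) (Fin 3) ℂ) i j =
        μ * (1 : Matrix (Fin 3) (Fin 3) ℂ) i j + f j * (v : Fin 3 → ℂ) i := by
      intro i j
      have h1 := congrFun (congrArg Subtype.val (hf j)) i
      simp [hL, Matrix.mulVec_single, Pi.single_apply] at h1
      rw [h1, Matrix.one_apply]
      simp
    set c : ℂˣ := Units.mk0 μ hμ0 with hc
    set S : GL3 := Units.map (Matrix.scalar (Fin 3)).toMonoidHom c⁻¹ with hS
    have hSv : (S : Matrix (Fin 3) (Fin 3) ℂ) = μ⁻¹ • 1 := by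
      change Matrix.scalar (Fin 3) ((c⁻¹ : ℂˣ) : ℂ) = _
      rw [Matrix.scalar_apply, Matrix.smul_one_eq_diagonal, hc]
      simp
    refine ⟨S * N, v, fun j => μ⁻¹ * f j, w, ?_, ?_, hw0, ?_⟩
    · have hSm : S ∈ scalarSubgroup := ⟨c⁻¹, rfl⟩
      rw [← hN, QuotientGroup.mk_mul, (QuotientGroup.eq_one_iff S).mpr hSm, one_mul]
    · rw [Units.val_mul, hSv]
      ext i j
      simp [hent, Matrix.vecMulVec_apply]
      field_simp
    · rw [Units.val_mul, hSv, ← Matrix.mulVec_mulVec, hw]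
      simp [Matrix.smul_mulVec, smul_smul, hμ0]
  · exact ⟨1, 0, 0, fun _ => 1, rfl, by simp, by
      intro h; simpa using congrFun h 0, by simp⟩

lemma diag_lift {x : PGL3} (h : IsRegularElliptic x) :
    ∃ (M P : GL3) (d : Fin 3 → ℂ) (n : ℕ), (QuotientGroup.mk M : PGL3) = x ∧ 0 < n ∧
      Function.Injective d ∧ (∀ i, d i ^ n = 1) ∧
      ((P * M * P⁻¹ : GL3) : Matrix (Fin 3) (Fin 3) ℂ) = Matrix.diagonal d := by
  obtain ⟨M, hM, ⟨n, hn, hMn⟩, a, b, c, hab, hac, hbc, ha, hb, hc⟩ := h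
  set d : Fin 3 → ℂ := ![a, b, c] with hd
  have hinj : Function.Injective d := by
    intro i j
    fin_cases i <;> fin_cases j <;> simp [hd, hab, hac, hbc, hab.symm, hac.symm, hbc.symm]
  have hev : ∀ i, Module.End.HasEigenvalue (Matrix.mulVecLin (M : Matrix (Fin 3) (Fin 3) ℂ)) (d i) := by
    intro i
    fin_cases i
    · exact ha
    · exact hb
    · exact hc
  choose w hw using fun i => (hev i).exists_hasEigenvector
  have hli := Module.End.eigenvectors_linearIndependent' _ d hinj w hw
  set Q : Matrix (Fin 3) (Fin 3) ℂ := Matrix.of (fun i j => w j i) with hQ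
  have hu : IsUnit Q := by
    rw [← Matrix.linearIndependent_cols_iff_isUnit]
    exact hli
  obtain ⟨Q', hQ'⟩ := hu
  have hMQ : (M : Matrix (Fin 3) (Fin 3) ℂ) * Q = Q * Matrix.diagonal d := by
    ext i j
    have h1 := congrFun (hw j).apply_eq_smul i
    rw [Matrix.mulVecLin_apply] at h1
    rw [Matrix.mul_diagonal, Matrix.mul_apply]
    simp only [Matrix.mulVec, dotProduct, Pi.smul_apply, smul_eq_mul] at h1
    simp only [hQ, Matrix.of_apply]
    rw [h1, mul_comm]
  have hconj : ((Q'⁻¹ * M * Q'⁻¹⁻¹ : GL3) : Matrix (Fin 3) (Fin 3) ℂ) = Matrix.diagonal d := by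
    rw [inv_inv, mul_assoc, Units.val_mul, Units.val_mul, hQ', hMQ, ← hQ', ← mul_assoc,
      ← Units.val_mul, inv_mul_cancel, Units.val_one, one_mul]
  refine ⟨M, Q'⁻¹, d, n, hM, hn, hinj, ?_, hconj⟩
  intro i
  have h2 : (Q'⁻¹ * M * Q'⁻¹⁻¹ : GL3) ^ n = 1 := by
    rw [conj_pow, hMn]; simp
  have h3 := congrArg Units.val h2
  rw [Units.val_pow_eq_pow_val, hconj, Matrix.diagonal_pow, Units.val_one] at h3
  have := congrFun (congrFun h3 i) i
  simpa using this

/-- Every type-preserving representation of the listed type three Deligne-Mostow groups into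
`PGL(3,ℂ)` is conjugate to one whose generator images lift to matrices with entries in a
cyclotomic extension `ℚ(ζₙ)` of `ℚ` inside `ℂ`, where `ζₙ = exp(2πi/n)`. -/
theorem typeThree_reps_cyclotomic :
    ∀ p k d : ℕ, (p, k) ∈ ({(7,2), (8,2), (9,2), (10,2), (12,2), (18,2)} : Set (ℕ × ℕ)) → 0 < d →
    (1 : ℚ) / d = 1 / 2 - 3 / p →
    ∀ ρ : GammaThree p k d →* PGL3,
      TypePreserving ρ (PresentedGroup.of Gen2.J) (PresentedGroup.of Gen2.R) →
      ∃ (g : PGL3) (n : ℕ), 0 < n ∧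
        ∃ MJ MR : GL3,
          (QuotientGroup.mk MJ : PGL3) = g * ρ (PresentedGroup.of Gen2.J) * g⁻¹ ∧
          (QuotientGroup.mk MR : PGL3) = g * ρ (PresentedGroup.of Gen2.R) * g⁻¹ ∧
          (∀ i j, (MJ : Matrix (Fin 3) (Fin 3) ℂ) i j ∈
            Algebra.adjoin ℚ {Complex.exp (2 * Real.pi * Complex.I / n)}) ∧
          (∀ i j, (MR : Matrix (Fin 3) (Fin 3) ℂ) i j ∈
            Algebra.adjoin ℚ {Complex.exp (2 * Real.pi * Complex.I / n)}) := by
  intro p k d hpk hd0 hd ρ hρ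
  obtain ⟨hR, hJ⟩ := hρ
  have hp : 0 < p ∧ 0 < k := by
    simp only [Set.mem_insert_iff, Set.mem_singleton_iff, Prod.mk.injEq] at hpk
    omega
  obtain ⟨hp, hk⟩ := hp
  obtain ⟨R, v, f, w, hRx, hRv, hw0, hRw⟩ := refl_lift hR
  obtain ⟨M, P, e, n, hMx, hn, hinj, hen, hPM⟩ := diag_lift hJ
  have rel1 : (PresentedGroup.of Gen2.R : GammaThree p k d) ^ p = 1 :=
    PresentedGroup.one_of_mem (rels := relsThree p k d) (x := (FreeGroup.of Gen2.R) ^ p)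
      (by simp [relsThree])
  have rel2 : ((PresentedGroup.of Gen2.R : GammaThree p k d) * PresentedGroup.of Gen2.J) ^ (2 * k) = 1 :=
    PresentedGroup.one_of_mem (rels := relsThree p k d)
      (x := (FreeGroup.of Gen2.R * FreeGroup.of Gen2.J) ^ (2 * k)) (by simp [relsThree])
  have hRp : (QuotientGroup.mk (R ^ p) : PGL3) = 1 := by
    rw [QuotientGroup.mk_pow, hRx, ← map_pow, rel1, map_one]
  have hRM : (QuotientGroup.mk ((R * M) ^ (2 * k)) : PGL3) = 1 := by
    rw [QuotientGroup.mk_pow, QuotientGroup.mk_mul, hRx, hMx, ← map_mul, ← map_pow, rel2, map_one]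
  obtain ⟨c, hc0, hc⟩ := mk_eq_one_scalar hRp
  obtain ⟨c', hc0', hc'⟩ := mk_eq_one_scalar hRM
  rw [Units.val_pow_eq_pow_val] at hc hc'
  have hRpw : ∀ m : ℕ, ((R : Matrix (Fin 3) (Fin 3) ℂ) ^ m).mulVec w = w := by
    intro m
    induction m with
    | zero => simp
    | succ m ih => rw [pow_succ, ← Matrix.mulVec_mulVec, hRw, ih]
  have hc1 : c = 1 := by
    have h1 := hRpw p
    rw [hc, Matrix.smul_mulVec, Matrix.one_mulVec] at h1
    obtain ⟨i, hi⟩ := Function.ne_iff.mp hw0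
    have h2 := congrFun h1 i
    simp only [Pi.smul_apply, smul_eq_mul] at h2
    exact (mul_eq_right₀ hi).mp h2
  have hdetR : (R : Matrix (Fin 3) (Fin 3) ℂ).det ^ p = 1 := by
    rw [← Matrix.det_pow, hc, hc1]; simp
  have hdetM : (M : Matrix (Fin 3) (Fin 3) ℂ).det ^ n = 1 := by
    have h1 := congrArg Matrix.det hPM
    rw [Units.val_mul, Units.val_mul, Matrix.det_mul, Matrix.det_mul, mul_right_comm,
      ← Matrix.det_mul, ← Units.val_mul, mul_inv_cancel, Units.val_one, Matrix.det_one, one_mul,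
      Matrix.det_diagonal] at h1
    rw [h1, ← Finset.prod_pow]
    simp [hen]
  have hcn : c' ^ (3 * (p * n)) = 1 := by
    have h1 := congrArg Matrix.det hc'
    rw [Matrix.det_smul, Matrix.det_one, mul_one, Matrix.det_pow, Units.val_mul, Matrix.det_mul,
      Fintype.card_fin] at h1
    have e1 : 2 * k * (p * n) = p * (2 * k * n) := by ring
    have e2 : 2 * k * (p * n) = n * (2 * k * p) := by ring
    rw [pow_mul, ← h1, ← pow_mul, mul_pow]
    nth_rewrite 1 [e1]
    rw [e2, pow_mul _ p, pow_mul _ n, hdetR, hdetM, one_pow, one_pow, one_mul]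
  set m := 2 * k * (3 * (p * n)) with hm
  have hm0 : 0 < m := by positivity
  have hRMm : (R * M) ^ m = 1 := by
    apply Units.ext
    rw [Units.val_pow_eq_pow_val, hm, pow_mul, hc', smul_pow, hcn]
    simp
  have hem : ∀ i, e i ^ m = 1 := by
    intro i
    have : m = n * (2 * k * 3 * p) := by rw [hm]; ring
    rw [this, pow_mul, hen, one_pow]
  set v' := (P : Matrix (Fin 3) (Fin 3) ℂ).mulVec v with hv'
  set f' := Matrix.vecMul f ((P⁻¹ : GL3) : Matrix (Fin 3) (Fin 3) ℂ) with hf'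
  have hPR : ((P * R * P⁻¹ : GL3) : Matrix (Fin 3) (Fin 3) ℂ) = 1 + Matrix.vecMulVec v' f' := by
    rw [Units.val_mul, Units.val_mul, hRv, mul_add, add_mul, mul_one, ← Units.val_mul,
      mul_inv_cancel, Units.val_one, Matrix.mul_vecMulVec, Matrix.vecMulVec_mul]
  have hx : ∀ i, v' i * f' i ∈ Algebra.adjoin ℚ {Complex.exp (2 * Real.pi * Complex.I / m)} := by
    apply cyc_core hm0 e v' f' hinj hem
    rw [← hPR, ← hPM, ← Units.val_mul, ← Units.val_pow_eq_pow_val]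
    have : P * R * P⁻¹ * (P * M * P⁻¹) = P * (R * M) * P⁻¹ := by group
    rw [this, conj_pow, hRMm]
    simp
  have ht : ∀ i, ∃ t : ℂ, t ≠ 0 ∧
      t * v' i ∈ Algebra.adjoin ℚ {Complex.exp (2 * Real.pi * Complex.I / m)} ∧
      f' i * t⁻¹ ∈ Algebra.adjoin ℚ {Complex.exp (2 * Real.pi * Complex.I / m)} := by
    intro i
    by_cases h1 : v' i = 0
    · by_cases h2 : f' i = 0
      · exact ⟨1, one_ne_zero, by simp [h1], by simp [h2]⟩
      · exact ⟨f' i, h2, by simp [h1], by rw [mul_inv_cancel₀ h2]; exact one_mem _⟩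
    · refine ⟨(v' i)⁻¹, inv_ne_zero h1, by rw [inv_mul_cancel₀ h1]; exact one_mem _, ?_⟩
      rw [inv_inv, mul_comm (f' i)]
      exact hx i
  choose t ht0 htv htf using ht
  set T : GL3 := ⟨Matrix.diagonal t, Matrix.diagonal (fun i => (t i)⁻¹),
    by rw [Matrix.diagonal_mul_diagonal]; simp [ht0],
    by rw [Matrix.diagonal_mul_diagonal]; simp [ht0]⟩ with hT
  have hTv : (T : Matrix (Fin 3) (Fin 3) ℂ) = Matrix.diagonal t := rfl
  have hTi : ((T⁻¹ : GL3) : Matrix (Fin 3) (Fin 3) ℂ) = Matrix.diagonal (fun i => (t i)⁻¹) := rfl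
  have hTM : ((T * (P * M * P⁻¹) * T⁻¹ : GL3) : Matrix (Fin 3) (Fin 3) ℂ) = Matrix.diagonal e := by
    rw [Units.val_mul, Units.val_mul, hPM, hTv, hTi, Matrix.diagonal_mul_diagonal,
      Matrix.diagonal_mul_diagonal]
    congr 1
    ext i
    field_simp [ht0 i]
  refine ⟨QuotientGroup.mk (T * P), m, hm0, T * (P * M * P⁻¹) * T⁻¹, T * (P * R * P⁻¹) * T⁻¹,
    ?_, ?_, ?_, ?_⟩
  · rw [← hMx, ← QuotientGroup.mk_inv, ← QuotientGroup.mk_mul, ← QuotientGroup.mk_mul]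
    congr 1
    group
  · rw [← hRx, ← QuotientGroup.mk_inv, ← QuotientGroup.mk_mul, ← QuotientGroup.mk_mul]
    congr 1
    group
  · intro i j
    rw [hTM, Matrix.diagonal_apply]
    split_ifs
    · exact cyc_root_mem hm0 (hem i)
    · exact zero_mem _
  · intro i j
    have hval : ((T * (P * R * P⁻¹) * T⁻¹ : GL3) : Matrix (Fin 3) (Fin 3) ℂ) i j =
        (1 : Matrix (Fin 3) (Fin 3) ℂ) i j + (t i * v' i) * (f' j * (t j)⁻¹) := by
      rw [Units.val_mul, Units.val_mul, hPR, hTv, hTi, Matrix.mul_diagonal, Matrix.diagonal_mul,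
        Matrix.add_apply, Matrix.vecMulVec_apply, Matrix.one_apply]
      split_ifs with h
      · subst h
        field_simp [ht0 i]
      · ring
    rw [hval, Matrix.one_apply]
    refine add_mem ?_ (mul_mem (htv i) (htf j))
    split_ifs
    · exact one_mem _
    · exact zero_mem _
end
end
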